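/- arXiv:1305.1309 — 5 statements merged into one kernel-verified Lean document; each statement's English description precedes it below -/
import Mathlib

section
/- Let N ≥ 2 and let L be an N×N real matrix. Suppose there are real numbers λ₁,…,λ_N with λ₁ = 0 and λ_i ≠ 0 for i ≥ 2, and vectors φ₁,…,φ_N and ψ₁,…,ψ_N in ℝ^N such that: each φ_i is a left eigenvector of L for λ_i (φ_iᵀ L = λ_i φ_iᵀ), each ψ_i is a right eigenvector of L for λ_i (L ψ_i = λ_i ψ_i), the dot product satisfies φ_i · ψ_j = 0 if and only if i ≠ j, and φ₁ = ψ₁ = (1,1,…,1). Let α, β be two indices, let I be a nonzero real number, and let V ∈ ℝ^N satisfy L V = I·(e_α − e_β), where e_α, e_β are standard basis vectors. Then (V_α − V_β)/I = Σ_{i=2}^{N} (φ_{iα} − φ_{iβ})(ψ_{iα} − ψ_{iβ}) / (λ_i (φ_i · ψ_i)). -/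
open Matrix Finset

theorem two_point_resistance_nonsymmetric
    {N : ℕ} (hN : 2 ≤ N) (L : Matrix (Fin N) (Fin N) ℝ)
    (lam : Fin N → ℝ) (φ ψ : Fin N → Fin N → ℝ)
    (hlam0 : lam ⟨0, by omega⟩ = 0)
    (hlamne : ∀ i : Fin N, i ≠ ⟨0, by omega⟩ → lam i ≠ 0)
    (hleft : ∀ i, Matrix.vecMul (φ i) L = lam i • φ i)
    (hright : ∀ i, L.mulVec (ψ i) = lam i • ψ i)
    (horth : ∀ i j, φ i ⬝ᵥ ψ j = 0 ↔ i ≠ j)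
    (hφ1 : φ ⟨0, by omega⟩ = fun _ => 1)
    (hψ1 : ψ ⟨0, by omega⟩ = fun _ => 1)
    (α β : Fin N) (I : ℝ) (hI : I ≠ 0) (V : Fin N → ℝ)
    (hV : L.mulVec V = I • (Pi.single α 1 - Pi.single β 1)) :
    (V α - V β) / I =
      ∑ i ∈ Finset.univ.erase ⟨0, by omega⟩,
        (φ i α - φ i β) * (ψ i α - ψ i β) / (lam i * (φ i ⬝ᵥ ψ i)) := by
  have hd : ∀ i, φ i ⬝ᵥ ψ i ≠ 0 := fun i h => ((horth i i).1 h) rfl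
  have hPQ : (Matrix.of φ) *
      (Matrix.of (fun k i => ψ i k * (φ i ⬝ᵥ ψ i)⁻¹) : Matrix (Fin N) (Fin N) ℝ) = 1 := by
    ext i j
    have h1 : ((Matrix.of φ) *
      (Matrix.of (fun k i => ψ i k * (φ i ⬝ᵥ ψ i)⁻¹) : Matrix (Fin N) (Fin N) ℝ)) i j
        = (φ i ⬝ᵥ ψ j) * (φ j ⬝ᵥ ψ j)⁻¹ := by
      rw [Matrix.mul_apply]
      conv_rhs => rw [dotProduct, Finset.sum_mul]
      refine Finset.sum_congr rfl fun k _ => ?_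
      simp only [Matrix.of_apply]
      ring
    rw [h1]
    by_cases hij : i = j
    · subst hij
      rw [Matrix.one_apply_eq, mul_inv_cancel₀ (hd i)]
    · rw [Matrix.one_apply_ne hij, (horth i j).2 hij, zero_mul]
  have hQP := mul_eq_one_comm.1 hPQ
  have hexp : ∀ k, V k = ∑ i, ψ i k * (φ i ⬝ᵥ ψ i)⁻¹ * (φ i ⬝ᵥ V) := by
    intro k
    have h := congrFun (congrArg (fun M => M.mulVec V) hQP) k
    simp only [Matrix.one_mulVec] at h
    rw [← Matrix.mulVec_mulVec] at h
    exact h.symm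
  have hco : ∀ i, lam i * (φ i ⬝ᵥ V) = I * (φ i α - φ i β) := by
    intro i
    have h : φ i ⬝ᵥ L.mulVec V = lam i * (φ i ⬝ᵥ V) := by
      rw [Matrix.dotProduct_mulVec, hleft, smul_dotProduct, smul_eq_mul]
    rw [← h, hV, dotProduct_smul, dotProduct_sub, dotProduct_single, dotProduct_single]
    simp
  rw [hexp α, hexp β, ← Finset.sum_sub_distrib, Finset.sum_div,
    ← Finset.add_sum_erase _ _ (Finset.mem_univ (⟨0, by omega⟩ : Fin N))]
  rw [hψ1]
  simp only [sub_self, zero_div, zero_add]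
  refine Finset.sum_congr rfl fun i hi => ?_
  have hl := hlamne i (Finset.ne_of_mem_erase hi)
  have hc : φ i ⬝ᵥ V = I * (φ i α - φ i β) / lam i := by
    rw [eq_div_iff hl, mul_comm, hco]
  have := hd i
  rw [hc]
  field_simp
end

section
/- Let N ≥ 2 and let L be a symmetric N×N real matrix. Suppose ψ₁,…,ψ_N form an orthonormal family in ℝ^N with L ψ_i = λ_i ψ_i for real numbers λ₁,…,λ_N, where λ₁ = 0, λ_i ≠ 0 for i ≥ 2, and ψ₁ = (1/√N,…,1/√N). Let α, β be two indices, I a nonzero real number, and V ∈ ℝ^N with L V = I·(e_α − e_β). Then (V_α − V_β)/I = Σ_{i=2}^{N} (ψ_{iα} − ψ_{iβ})² / λ_i. -/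
open Matrix Finset

theorem two_point_resistance_symmetric
    {N : ℕ} (hN : 2 ≤ N) (L : Matrix (Fin N) (Fin N) ℝ)
    (hsym : L.IsSymm)
    (lam : Fin N → ℝ) (ψ : Fin N → Fin N → ℝ)
    (horth : ∀ i j, ψ i ⬝ᵥ ψ j = if i = j then 1 else 0)
    (heig : ∀ i, L.mulVec (ψ i) = lam i • ψ i)
    (hlam0 : lam ⟨0, by omega⟩ = 0)
    (hlamne : ∀ i : Fin N, i ≠ ⟨0, by omega⟩ → lam i ≠ 0)
    (hψ1 : ψ ⟨0, by omega⟩ = fun _ => 1 / Real.sqrt N)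
    (α β : Fin N) (I : ℝ) (hI : I ≠ 0) (V : Fin N → ℝ)
    (hV : L.mulVec V = I • (Pi.single α 1 - Pi.single β 1)) :
    (V α - V β) / I =
      ∑ i ∈ Finset.univ.erase ⟨0, by omega⟩,
        (ψ i α - ψ i β) ^ 2 / lam i := by
  have hP : (Matrix.of ψ) * (Matrix.of ψ)ᵀ = 1 := by
    ext i j
    have := horth i j
    simpa [Matrix.mul_apply, Matrix.one_apply, dotProduct] using this
  have hP' : (Matrix.of ψ)ᵀ * (Matrix.of ψ) = 1 := mul_eq_one_comm.mp hP
  have hexp : ∀ a, V a = ∑ i, ψ i a * (ψ i ⬝ᵥ V) := by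
    intro a
    have h1 : (Matrix.of ψ)ᵀ *ᵥ ((Matrix.of ψ) *ᵥ V) = V := by
      rw [Matrix.mulVec_mulVec, hP', Matrix.one_mulVec]
    have h2 := congrFun h1 a
    rw [← h2]
    rfl
  have hc : ∀ i, lam i * (ψ i ⬝ᵥ V) = I * (ψ i α - ψ i β) := by
    intro i
    have h1 : ψ i ⬝ᵥ (L *ᵥ V) = (L *ᵥ ψ i) ⬝ᵥ V := by
      rw [Matrix.dotProduct_mulVec, ← Matrix.mulVec_transpose, hsym.eq]
    rw [heig, hV, smul_dotProduct, dotProduct_smul, dotProduct_sub] at h1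
    simp only [dotProduct_single, smul_eq_mul, mul_one] at h1
    exact h1.symm
  rw [hexp α, hexp β, ← Finset.sum_sub_distrib, Finset.sum_div,
    ← Finset.add_sum_erase _ _ (Finset.mem_univ (⟨0, by omega⟩ : Fin N))]
  rw [hψ1]
  simp only [sub_self, zero_div, zero_add]
  refine Finset.sum_congr rfl fun i hi => ?_
  have hl := hlamne i (Finset.ne_of_mem_erase hi)
  rw [div_eq_div_iff hI hl]
  linear_combination (ψ i α - ψ i β) * hc i
end

section
/- Let c₁ > 0, c₂ > 0 and G ≥ 0 be real numbers and let L be the 4×4 real matrix with rows (2c₁, −c₁, 0, −c₁), (−c₁+G, 2c₁+c₂, −c₁, −c₂−G), (0, −c₁, 2c₁, −c₁), (−c₁−G, −c₂, −c₁, 2c₁+c₂+G). Let I ≠ 0 be real and let V ∈ ℝ⁴ satisfy L V = I·(e₂ − e₄), where e₂ and e₄ are the standard basis vectors for the second and fourth coordinates. Then (V₂ − V₄)/I = 2/(2c₁ + 2c₂ + G); equivalently, writing R₁ = 1/c₁ and R₂ = 1/c₂, the resistance between nodes 2 and 4 equals 2R₁R₂/(2R₁ + 2R₂ + G·R₁R₂).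 -/
open Matrix

theorem bridge_resistance_R24
    (c₁ c₂ G : ℝ) (hc₁ : 0 < c₁) (hc₂ : 0 < c₂) (hG : 0 ≤ G)
    (L : Matrix (Fin 4) (Fin 4) ℝ)
    (hL : L = !![2*c₁, -c₁, 0, -c₁;
                 -c₁+G, 2*c₁+c₂, -c₁, -c₂-G;
                 0, -c₁, 2*c₁, -c₁;
                 -c₁-G, -c₂, -c₁, 2*c₁+c₂+G])
    (I : ℝ) (hI : I ≠ 0) (V : Fin 4 → ℝ)
    (hV : L.mulVec V = I • (Pi.single 1 1 - Pi.single 3 1)) :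
    (V 1 - V 3) / I = 2 / (2*c₁ + 2*c₂ + G) := by
  subst hL
  have h0 := congrFun hV 0
  have h1 := congrFun hV 1
  have h2 := congrFun hV 2
  simp [Matrix.mulVec, dotProduct, Fin.sum_univ_four, Pi.single_apply] at h0 h1 h2
  have e0 : V 0 = (V 1 + V 3) / 2 := by
    apply mul_left_cancel₀ hc₁.ne'
    linarith
  have e2 : V 2 = (V 1 + V 3) / 2 := by
    apply mul_left_cancel₀ hc₁.ne'
    linarith
  rw [e0, e2] at h1
  have hp : 0 < 2*c₁ + 2*c₂ + G := by positivity
  rw [div_eq_div_iff hI hp.ne']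
  linarith
end

section
/- Let c₁ > 0 and G ≥ 0 be real numbers and let L be the 4×4 real matrix with rows (3c₁, −c₁, −c₁, −c₁), (−c₁, 3c₁, −c₁, −c₁), (−c₁+G, −c₁, 3c₁, −c₁−G), (−c₁−G, −c₁, −c₁, 3c₁+G). Let I ≠ 0 be real and let V ∈ ℝ⁴ satisfy L V = I·(e₁ − e₃). Then (V₁ − V₃)/I = 3/(4c₁) − 1/(4c₁ + G); that is, writing R = 1/c₁, the resistance between nodes 1 and 3 equals R·(3/4 − 1/(4 + GR)). -/
open Matrix

theorem complete_network_resistance_R13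
    (c₁ G : ℝ) (hc₁ : 0 < c₁) (hG : 0 ≤ G)
    (L : Matrix (Fin 4) (Fin 4) ℝ)
    (hL : L = !![3*c₁, -c₁, -c₁, -c₁;
                 -c₁, 3*c₁, -c₁, -c₁;
                 -c₁+G, -c₁, 3*c₁, -c₁-G;
                 -c₁-G, -c₁, -c₁, 3*c₁+G])
    (I : ℝ) (hI : I ≠ 0) (V : Fin 4 → ℝ)
    (hV : L.mulVec V = I • (Pi.single 0 1 - Pi.single 2 1)) :
    (V 0 - V 2) / I = 3 / (4*c₁) - 1 / (4*c₁ + G) := by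
  subst hL
  have h0 := congrFun hV 0
  have h2 := congrFun hV 2
  have h3 := congrFun hV 3
  simp [Matrix.mulVec, dotProduct, Fin.sum_univ_four, Pi.single_apply] at h0 h2 h3
  have hd : 4*c₁ + G ≠ 0 := by positivity
  have hx : V 0 - V 3 = I / (4*c₁ + G) := by
    rw [eq_div_iff hd]; linarith
  have hy : V 0 - V 2 = (2*I + G*(V 0 - V 3)) / (4*c₁) := by
    rw [eq_div_iff (by positivity)]; linarith
  rw [hy, hx]
  field_simp
  ring
end

section
/- Let c₁ > 0 and G ≥ 0 be real numbers and let L be the 4×4 real matrix with rows (3c₁, −c₁, −c₁, −c₁), (−c₁, 3c₁, −c₁, −c₁), (−c₁+G, −c₁, 3c₁, −c₁−G), (−c₁−G, −c₁, −c₁, 3c₁+G). Let I ≠ 0 be real and let V ∈ ℝ⁴ satisfy L V = I·(e₁ − e₄). Then (V₁ − V₄)/I = 2/(4c₁ + G); that is, writing R = 1/c₁, the resistance between nodes 1 and 4 equals 2R/(4 + GR). -/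
open Matrix

theorem complete_network_resistance_R14
    (c₁ G : ℝ) (hc₁ : 0 < c₁) (hG : 0 ≤ G)
    (L : Matrix (Fin 4) (Fin 4) ℝ)
    (hL : L = !![3*c₁, -c₁, -c₁, -c₁;
                 -c₁, 3*c₁, -c₁, -c₁;
                 -c₁+G, -c₁, 3*c₁, -c₁-G;
                 -c₁-G, -c₁, -c₁, 3*c₁+G])
    (I : ℝ) (hI : I ≠ 0) (V : Fin 4 → ℝ)
    (hV : L.mulVec V = I • (Pi.single 0 1 - Pi.single 3 1)) :
    (V 0 - V 3) / I = 2 / (4*c₁ + G) := by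
  subst hL
  have h0 := congrFun hV 0
  have h3 := congrFun hV 3
  simp [Matrix.mulVec, dotProduct, Fin.sum_univ_four] at h0 h3
  have hp : 4*c₁ + G ≠ 0 := by positivity
  rw [div_eq_div_iff hI hp]
  linarith
end
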